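/- Let k ≥ 2 be an integer and let 0 < ε' < 1. For all sufficiently large n (depending on k and ε'), if G is an n-vertex W_{2k+1}-free simple graph attaining the maximum spectral radius among all n-vertex W_{2k+1}-free graphs, and x is a nonnegative eigenvector of the adjacency matrix of G corresponding to λ₁(G), normalized so that its maximum entry equals 1, then x_u > 1 − ε' for every vertex u of G. -/

import Mathlib

/-- The wheel graph on `t` vertices: vertex `0` joined to every vertex of the
cycle `1, 2, …, t-1` (with `t-1` adjacent to `1`). -/
def wheelGraph (t : ℕ) : SimpleGraph (Fin t) where
  Adj a b := a ≠ b ∧ (a.val = 0 ∨ b.val = 0 ∨ a.val + 1 = b.val ∨ b.val + 1 = a.val ∨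
      (a.val = 1 ∧ b.val = t - 1) ∨ (b.val = 1 ∧ a.val = t - 1))
  symm := by
    refine ⟨?_⟩
    intro a b h
    exact ⟨h.1.symm, by tauto⟩
  loopless := by
    refine ⟨?_⟩
    intro a h
    exact h.1 rfl

/-- `G` contains a copy of `F`, i.e. a subgraph isomorphic to `F`. -/
def ContainsCopy {α β : Type*} (F : SimpleGraph α) (G : SimpleGraph β) : Prop :=
  ∃ f : α ↪ β, ∀ a b, F.Adj a b → G.Adj (f a) (f b)

/-- `G` is `W_t`-free: it contains no subgraph isomorphic to the wheel on `t` vertices. -/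
def WheelFree (t : ℕ) {n : ℕ} (G : SimpleGraph (Fin n)) : Prop :=
  ¬ ContainsCopy (wheelGraph t) G

/-- The spectral radius of `G`: the largest eigenvalue of its adjacency matrix. -/
noncomputable def lam1 {n : ℕ} (G : SimpleGraph (Fin n)) : ℝ := by
  classical
  exact sSup {μ : ℝ | Module.End.HasEigenvalue (Matrix.toLin' (G.adjMatrix ℝ)) μ}

/-- The number of edges of a graph on a finite vertex type. -/
noncomputable def edgeCount {V : Type*} [Fintype V] (G : SimpleGraph V) : ℕ := by
  classical
  exact G.edgeFinset.card

/-- The degree of a vertex. -/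
noncomputable def deg {n : ℕ} (G : SimpleGraph (Fin n)) (v : Fin n) : ℕ := by
  classical
  exact G.degree v

/-- The number of neighbours of `v` inside the set `A`. -/
noncomputable def degIn {n : ℕ} (G : SimpleGraph (Fin n)) (A : Finset (Fin n)) (v : Fin n) : ℕ := by
  classical
  exact (A.filter fun u => G.Adj v u).card

/-- The number of edges of `G` with one endpoint in `S` and the other outside `S`. -/
noncomputable def cutCount {n : ℕ} (G : SimpleGraph (Fin n)) (S : Finset (Fin n)) : ℕ := by
  classical
  exact ((Finset.univ : Finset (Fin n × Fin n)).filter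
    fun p => G.Adj p.1 p.2 ∧ p.1 ∈ S ∧ p.2 ∉ S).card

/-- `(S, T)` is a maximum cut of `G`. -/
def IsMaxCut {n : ℕ} (G : SimpleGraph (Fin n)) (S T : Finset (Fin n)) : Prop :=
  T = Sᶜ ∧ ∀ S' : Finset (Fin n), cutCount G S' ≤ cutCount G S

/-- `G` attains the maximum spectral radius among all `n`-vertex `W_t`-free graphs. -/
def IsSpexWheel (t : ℕ) {n : ℕ} (G : SimpleGraph (Fin n)) : Prop :=
  WheelFree t G ∧ ∀ H : SimpleGraph (Fin n), WheelFree t H → lam1 H ≤ lam1 G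

/-- `G` attains the maximum number of edges among all `n`-vertex `W_t`-free graphs. -/
def IsExWheel (t : ℕ) {n : ℕ} (G : SimpleGraph (Fin n)) : Prop :=
  WheelFree t G ∧ ∀ H : SimpleGraph (Fin n), WheelFree t H → edgeCount H ≤ edgeCount G

/-- Multiplication of a vector by the adjacency matrix of `G`. -/
noncomputable def adjMulVec {n : ℕ} (G : SimpleGraph (Fin n)) (x : Fin n → ℝ) :
    Fin n → ℝ := by
  classical
  exact (G.adjMatrix ℝ).mulVec x


open Classical in
/-- Rayleigh principle for `lam1`. -/
lemma rayleigh_le_lam1 {n : ℕ} (H : SimpleGraph (Fin n)) (y : Fin n → ℝ) :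
    ∑ i, ∑ j, (if H.Adj i j then y i * y j else 0) ≤ lam1 H * ∑ i, y i ^ 2 := by
  set A : Matrix (Fin n) (Fin n) ℝ := H.adjMatrix ℝ with hA
  have hsymm : A.IsHermitian := by
    ext i j
    simp [hA, SimpleGraph.adj_comm]
  have hfin : Set.Finite {μ : ℝ | Module.End.HasEigenvalue (Matrix.toLin' A) μ} :=
    Module.End.finite_hasEigenvalue _
  have hle : ∀ μ : ℝ, Module.End.HasEigenvalue (Matrix.toLin' A) μ → μ ≤ lam1 H := by
    intro μ hμ
    have h2 := le_csSup hfin.bddAbove hμ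
    unfold lam1
    convert h2
  have hB : (lam1 H • (1 : Matrix (Fin n) (Fin n) ℝ) - A).IsHermitian := by
    refine Matrix.IsHermitian.sub ?_ hsymm
    ext i j
    simp [Matrix.one_apply, eq_comm]
  have hpsd : (lam1 H • (1 : Matrix (Fin n) (Fin n) ℝ) - A).PosSemidef := by
    rw [hB.posSemidef_iff_eigenvalues_nonneg]
    intro i
    have h1 := hB.mulVec_eigenvectorBasis i
    set w : Fin n → ℝ := (hB.eigenvectorBasis i).ofLp with hw
    have hwne : w ≠ 0 := by
      intro h0
      have := hB.eigenvectorBasis.toBasis.ne_zero i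
      apply this
      simp only [OrthonormalBasis.coe_toBasis]
      ext j
      exact congrFun h0 j
    have h2 : A.mulVec w = (lam1 H - hB.eigenvalues i) • w := by
      rw [Matrix.sub_mulVec, Matrix.smul_mulVec, Matrix.one_mulVec] at h1
      rw [sub_smul, ← h1]
      simp
    have h3 : Module.End.HasEigenvalue (Matrix.toLin' A) (lam1 H - hB.eigenvalues i) := by
      apply Module.End.hasEigenvalue_of_hasEigenvector (x := w)
      refine ⟨?_, hwne⟩
      rw [Module.End.mem_eigenspace_iff, Matrix.toLin'_apply, h2]
    have := hle _ h3
    simp only [Pi.zero_apply]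
    linarith
  have h := hpsd.dotProduct_mulVec_nonneg y
  rw [Matrix.sub_mulVec, Matrix.smul_mulVec, Matrix.one_mulVec, dotProduct_sub] at h
  have e1 : star y ⬝ᵥ (lam1 H • y) = lam1 H * ∑ i, y i ^ 2 := by
    simp only [dotProduct, Finset.mul_sum, Pi.star_apply, star_trivial, Pi.smul_apply, smul_eq_mul]
    exact Finset.sum_congr rfl fun i _ => by ring
  have e2 : star y ⬝ᵥ (A.mulVec y) = ∑ i, ∑ j, (if H.Adj i j then y i * y j else 0) := by
    simp only [dotProduct, Matrix.mulVec, Finset.mul_sum, Pi.star_apply, star_trivial]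
    refine Finset.sum_congr rfl fun i _ => Finset.sum_congr rfl fun j _ => ?_
    simp [hA, SimpleGraph.adjMatrix_apply]
  rw [e1, e2] at h
  linarith

/-- Complete bipartite graphs give the lower bound. -/
lemma lam1_lower {k n : ℕ} (hk : 2 ≤ k) (hn : 1 ≤ n) (G : SimpleGraph (Fin n))
    (hG : IsSpexWheel (2 * k + 1) G) : ((n : ℝ) - 1) / 2 ≤ lam1 G := by
  classical
  obtain ⟨S, -, hS⟩ := Finset.exists_subset_card_eq (s := (Finset.univ : Finset (Fin n)))
    (n := n / 2) (by simp; omega)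
  let H : SimpleGraph (Fin n) :=
    { Adj := fun i j => ¬ (i ∈ S ↔ j ∈ S)
      symm := ⟨fun i j h => by tauto⟩
      loopless := ⟨fun i h => by tauto⟩ }
  have hH : WheelFree (2 * k + 1) H := by
    rintro ⟨f, hf⟩
    have h01 := hf ⟨0, by omega⟩ ⟨1, by omega⟩ (by simp [wheelGraph])
    have h02 := hf ⟨0, by omega⟩ ⟨2, by omega⟩ (by simp [wheelGraph])
    have h12 := hf ⟨1, by omega⟩ ⟨2, by omega⟩ (by simp [wheelGraph])
    simp only [H] at h01 h02 h12
    tauto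
  have h1 := hG.2 H hH
  have h2 := rayleigh_le_lam1 H (fun _ => 1)
  have h3 : ∑ i, ∑ j, (if H.Adj i j then (1:ℝ) * 1 else 0) = 2 * (S.card * (Sᶜ).card) := by
    have hin : ∀ i, ∑ j, (if H.Adj i j then (1:ℝ) * 1 else 0)
        = if i ∈ S then ((Sᶜ).card : ℝ) else S.card := by
      intro i
      by_cases hi : i ∈ S
      · simp only [H, hi, true_iff, if_true, mul_one, Finset.sum_boole]
        congr 2; ext j; simp
      · simp only [H, hi, false_iff, not_not, if_false, mul_one, Finset.sum_boole]
        congr 2; ext j; simp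
    rw [Finset.sum_congr rfl fun i _ => hin i, Finset.sum_ite]
    have e1 : (Finset.univ.filter fun i => i ∈ S) = S := by ext; simp
    have e2 : (Finset.univ.filter fun i => i ∉ S) = Sᶜ := by ext; simp
    rw [e1, e2]; simp; ring
  have h3' : ∑ i, ∑ j, (if H.Adj i j then (1:ℝ) * 1 else 0) ≤ lam1 H * n := by
    simpa using h2
  rw [h3, Finset.card_compl, Fintype.card_fin, hS] at h3'
  rw [Nat.cast_sub (by omega)] at h3'
  have hn' : (1:ℝ) ≤ n := by exact_mod_cast hn
  have hlow : ((n:ℝ) - 1) / 2 ≤ ((n / 2 : ℕ) : ℝ) := by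
    have : n ≤ 2 * (n / 2) + 1 := by omega
    have : (n:ℝ) ≤ 2 * ((n / 2 : ℕ) : ℝ) + 1 := by exact_mod_cast this
    linarith
  have hup : ((n / 2 : ℕ) : ℝ) ≤ (n:ℝ) / 2 := Nat.cast_div_le
  set s := ((n / 2 : ℕ) : ℝ)
  have h4 : ((n : ℝ) - 1) / 2 * n ≤ lam1 H * n := by nlinarith
  have := le_of_mul_le_mul_right h4 (by linarith)
  linarith

/-- A Kővári–Sós–Turán type statement. -/
lemma kst_weak (k : ℕ) (hk : 1 ≤ k) (δ : ℝ) (hδ : 0 < δ) : ∃ N : ℕ, ∀ n : ℕ, N ≤ n →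
    ∀ (A : Finset (Fin n)) (F : Fin n → Finset (Fin n)),
      δ * (n:ℝ) ^ 2 < ∑ w ∈ A, ((F w).card : ℝ) →
      ∃ P Q : Finset (Fin n), P ⊆ A ∧ P.card = k ∧ Q.card = k ∧ ∀ w ∈ P, Q ⊆ F w := by
  classical
  obtain ⟨M, hM⟩ := exists_nat_ge (4 * k / δ)
  obtain ⟨N1, hN1⟩ := exists_nat_ge (2 * (M:ℝ) / δ)
  refine ⟨N1 + 2 ^ M * M + 1, fun n hn A F hsum => ?_⟩
  have hk' : (1:ℝ) ≤ k := by exact_mod_cast hk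
  have hMpos : (0:ℝ) < M := lt_of_lt_of_le (by positivity) hM
  have hnpos : (0:ℝ) < n := by
    have : 1 ≤ n := by omega
    exact_mod_cast this
  have hMδ : 4 * (k:ℝ) ≤ M * δ := by rwa [div_le_iff₀ hδ] at hM
  have hnM : 2 * (M:ℝ) ≤ n * δ := by
    rw [div_le_iff₀ hδ] at hN1
    have : (N1:ℝ) ≤ n := by exact_mod_cast (by omega : N1 ≤ n)
    nlinarith
  set W := A.filter fun w => δ / 2 * n ≤ (F w).card with hW
  have hcardle : ∀ s : Finset (Fin n), (s.card : ℝ) ≤ n := by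
    intro s
    exact_mod_cast (by simpa using s.card_le_univ)
  have hWcard : (M:ℝ) ≤ W.card := by
    have h1 : ∑ w ∈ A, ((F w).card : ℝ) ≤
        ∑ w ∈ A, ((if δ / 2 * n ≤ (F w).card then (n:ℝ) else 0) + δ / 2 * n) := by
      refine Finset.sum_le_sum fun w _ => ?_
      split_ifs with h
      · have := hcardle (F w)
        have : 0 ≤ δ / 2 * n := by positivity
        linarith
      · push Not at h; linarith
    rw [Finset.sum_add_distrib, ← Finset.sum_filter, Finset.sum_const, Finset.sum_const,
      nsmul_eq_mul, nsmul_eq_mul, ← hW] at h1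
    have h2 := hcardle A
    have h3 : (A.card : ℝ) * (δ / 2 * n) ≤ n * (δ / 2 * n) :=
      mul_le_mul_of_nonneg_right h2 (by positivity)
    have h4 : (M:ℝ) * n ≤ W.card * n := by nlinarith
    exact le_of_mul_le_mul_right h4 hnpos
  obtain ⟨W', hW'W, hW'⟩ := Finset.exists_subset_card_eq (s := W) (n := M)
    (by exact_mod_cast hWcard)
  set c : Fin n → Finset (Fin n) := fun u => W'.filter fun w => u ∈ F w with hc
  set U := Finset.univ.filter fun u => k ≤ (c u).card with hU
  have hdc : ∑ w ∈ W', ((F w).card : ℝ) = ∑ u, ((c u).card : ℝ) := by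
    have : ∑ w ∈ W', (F w).card = ∑ u, (c u).card := by
      have := Finset.sum_card_bipartiteAbove_eq_sum_card_bipartiteBelow
        (s := W') (t := (Finset.univ : Finset (Fin n))) (fun w u => u ∈ F w)
      simpa [Finset.bipartiteAbove, Finset.bipartiteBelow] using this
    exact_mod_cast this
  have hlow : (M:ℝ) * (δ / 2 * n) ≤ ∑ w ∈ W', ((F w).card : ℝ) := by
    rw [← hW', ← nsmul_eq_mul]
    refine Finset.card_nsmul_le_sum _ _ _ fun w hw => ?_
    exact (Finset.mem_filter.1 (hW'W hw)).2
  have hup : ∑ u, ((c u).card : ℝ) ≤ U.card * M + n * k := by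
    have h1 : ∑ u, ((c u).card : ℝ) ≤
        ∑ u, ((if k ≤ (c u).card then (M:ℝ) else 0) + k) := by
      refine Finset.sum_le_sum fun u _ => ?_
      split_ifs with h
      · have : (c u).card ≤ M := hW' ▸ Finset.card_filter_le _ _
        have : ((c u).card : ℝ) ≤ M := by exact_mod_cast this
        linarith
      · push Not at h
        have : ((c u).card : ℝ) ≤ k := by exact_mod_cast h.le
        linarith
    rw [Finset.sum_add_distrib, ← Finset.sum_filter, Finset.sum_const, Finset.sum_const,
      nsmul_eq_mul, nsmul_eq_mul, ← hU] at h1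
    simpa using h1
  have hUc : 2 ^ M * k < U.card := by
    have h1 : (n:ℝ) * k ≤ U.card * M := by nlinarith
    have h2 : (2:ℝ) ^ M * M < n := by exact_mod_cast (by omega : 2 ^ M * M < n)
    have h3 : ((2:ℝ) ^ M * k) * M < U.card * M := by nlinarith
    have := lt_of_mul_lt_mul_right h3 hMpos.le
    exact_mod_cast this
  have hch : ∀ u, ∃ T : Finset (Fin n), u ∈ U → T ⊆ c u ∧ T.card = k := by
    intro u
    by_cases hu : u ∈ U
    · obtain ⟨T, h1, h2⟩ := Finset.exists_subset_card_eq (Finset.mem_filter.1 hu).2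
      exact ⟨T, fun _ => ⟨h1, h2⟩⟩
    · exact ⟨∅, fun h => absurd h hu⟩
  choose g hg using hch
  obtain ⟨P, -, hP⟩ := Finset.exists_lt_card_fiber_of_mul_lt_card_of_maps_to (s := U)
    (t := W'.powerset) (f := g) (n := k)
    (fun u hu => Finset.mem_powerset.2 ((hg u hu).1.trans (Finset.filter_subset _ _)))
    (by rw [Finset.card_powerset, hW']; exact hUc)
  obtain ⟨Q, hQ, hQc⟩ := Finset.exists_subset_card_eq hP.le
  have hQ1 : Q.Nonempty := by rw [← Finset.card_pos]; omega
  obtain ⟨q, hq⟩ := hQ1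
  have hq' := Finset.mem_filter.1 (hQ hq)
  refine ⟨P, Q, ?_, ?_, hQc, ?_⟩
  · rw [← hq'.2]
    exact (hg q hq'.1).1.trans ((Finset.filter_subset _ _).trans
      (hW'W.trans (Finset.filter_subset _ _)))
  · rw [← hq'.2]; exact (hg q hq'.1).2
  · intro w hw u hu
    have hu' := Finset.mem_filter.1 (hQ hu)
    have := (hg u hu'.1).1 (hu'.2 ▸ hw)
    exact (Finset.mem_filter.1 this).2

/-- A complete bipartite graph in a neighbourhood yields a wheel. -/
lemma wheel_of_biclique {k n : ℕ} (hk : 2 ≤ k) (G : SimpleGraph (Fin n)) (z : Fin n)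
    (P Q : Finset (Fin n)) (hP : P.card = k) (hQ : Q.card = k)
    (hzP : ∀ w ∈ P, G.Adj z w) (hzQ : ∀ w ∈ Q, G.Adj z w)
    (hPQ : ∀ w ∈ P, ∀ u ∈ Q, G.Adj w u) : ContainsCopy (wheelGraph (2 * k + 1)) G := by
  classical
  let a := P.orderEmbOfFin hP
  let b := Q.orderEmbOfFin hQ
  have ha : ∀ i, a i ∈ P := fun i => Finset.orderEmbOfFin_mem P hP i
  have hb : ∀ i, b i ∈ Q := fun i => Finset.orderEmbOfFin_mem Q hQ i
  have hab : ∀ i j, G.Adj (a i) (b j) := fun i j => hPQ _ (ha i) _ (hb j)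
  let f : Fin (2 * k + 1) → Fin n := fun i =>
    if h0 : i.val = 0 then z
    else if i.val % 2 = 1 then a ⟨(i.val - 1) / 2, by omega⟩ else b ⟨(i.val - 1) / 2, by omega⟩
  have hf0 : ∀ i : Fin (2 * k + 1), i.val = 0 → f i = z := fun i h => dif_pos h
  have hz : ∀ i : Fin (2 * k + 1), i.val ≠ 0 → G.Adj z (f i) := by
    intro i h
    simp only [f, h, dif_neg, not_false_eq_true]
    split_ifs
    · exact hzP _ (ha _)
    · exact hzQ _ (hb _)
  have hpar : ∀ i j : Fin (2 * k + 1), i.val ≠ 0 → j.val ≠ 0 → i.val % 2 ≠ j.val % 2 →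
      G.Adj (f i) (f j) := by
    intro i j hi hj hij
    simp only [f, hi, hj, dif_neg, not_false_eq_true]
    split_ifs
    · omega
    · exact hab _ _
    · exact (hab _ _).symm
    · omega
  refine ⟨⟨f, ?_⟩, ?_⟩
  · intro i j hij
    by_cases hi : i.val = 0
    · by_cases hj : j.val = 0
      · ext; omega
      · have := hz j hj
        rw [← hij, hf0 i hi] at this
        exact absurd this (G.loopless.irrefl z)
    · by_cases hj : j.val = 0
      · have := hz i hi
        rw [hij, hf0 j hj] at this
        exact absurd this (G.loopless.irrefl z)
      · by_cases hp : i.val % 2 = j.val % 2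
        · simp only [f, hi, hj, dif_neg, not_false_eq_true, hp] at hij
          ext
          split_ifs at hij with h1
          · have := a.injective hij
            simp only [Fin.mk.injEq] at this
            omega
          · have := b.injective hij
            simp only [Fin.mk.injEq] at this
            omega
        · have := hpar i j hi hj hp
          rw [hij] at this
          exact absurd this (G.loopless.irrefl _)
  · rintro i j ⟨hne, h⟩
    have hne' : i.val ≠ j.val := fun h => hne (Fin.ext h)
    change G.Adj (f i) (f j)
    by_cases hi : i.val = 0
    · rw [hf0 i hi]; exact hz j (by omega)
    · by_cases hj : j.val = 0
      · rw [hf0 j hj]; exact (hz i (by omega)).symm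
      · exact hpar i j hi hj (by omega)

/-- Delete all edges at `v` and join `v` to all of `S`. -/
def rewire {n : ℕ} (G : SimpleGraph (Fin n)) (v : Fin n) (S : Finset (Fin n)) :
    SimpleGraph (Fin n) where
  Adj i j := (i ≠ v ∧ j ≠ v ∧ G.Adj i j) ∨ (i = v ∧ j ≠ v ∧ j ∈ S) ∨ (j = v ∧ i ≠ v ∧ i ∈ S)
  symm := ⟨fun i j h => by
    rcases h with h | h | h
    · exact Or.inl ⟨h.2.1, h.1, h.2.2.symm⟩
    · exact Or.inr (Or.inr h)
    · exact Or.inr (Or.inl h)⟩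
  loopless := ⟨fun i h => by
    rcases h with h | h | h
    · exact G.loopless.irrefl i h.2.2
    · exact h.2.1 h.1
    · exact h.2.1 h.1⟩

lemma rewire_wheelFree {t n : ℕ} (G : SimpleGraph (Fin n)) (hG : WheelFree t G) (v : Fin n)
    (S : Finset (Fin n))
    (hS : ∀ T : Finset (Fin n), T.card ≤ t → ∃ v', v' ∉ T ∧ ∀ u ∈ T, u ∈ S → G.Adj v' u) :
    WheelFree t (rewire G v S) := by
  classical
  rintro ⟨f, hf⟩
  apply hG
  obtain ⟨v', hv', hadj⟩ := hS (Finset.univ.image f) (by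
    refine Finset.card_image_le.trans ?_
    simp)
  have hne : ∀ i, f i ≠ v' := fun i h => hv' (by rw [← h]; simp)
  have hadj' : ∀ i, f i ∈ S → G.Adj v' (f i) := fun i h => hadj _ (by simp) h
  refine ⟨⟨fun i => if f i = v then v' else f i, ?_⟩, ?_⟩
  · intro i j hij
    simp only at hij
    split_ifs at hij with h1 h2 h3
    · exact f.injective (h1.trans h2.symm)
    · exact absurd hij.symm (hne j)
    · exact absurd hij (hne i)
    · exact f.injective hij
  · intro i j hij
    change G.Adj (if f i = v then v' else f i) (if f j = v then v' else f j)
    rcases hf i j hij with h | h | h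
    · rw [if_neg h.1, if_neg h.2.1]; exact h.2.2
    · rw [if_pos h.1, if_neg h.2.1]; exact hadj' j h.2.2
    · rw [if_neg h.2.1, if_pos h.1]; exact (hadj' i h.2.2).symm

lemma sum_split {n : ℕ} (v : Fin n) (f : Fin n → Fin n → ℝ) (hs : ∀ i j, f i j = f j i)
    (hv : f v v = 0) :
    ∑ i, ∑ j, f i j = ∑ i ∈ Finset.univ.erase v, ∑ j ∈ Finset.univ.erase v, f i j
      + 2 * ∑ j, f v j := by
  classical
  have h1 : ∀ g : Fin n → ℝ, ∑ i, g i = ∑ i ∈ Finset.univ.erase v, g i + g v := fun g =>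
    (Finset.sum_erase_add _ _ (Finset.mem_univ v)).symm
  rw [h1 (fun i => ∑ j, f i j)]
  rw [Finset.sum_congr rfl fun i _ => h1 (fun j => f i j), Finset.sum_add_distrib]
  have h2 : ∑ i ∈ Finset.univ.erase v, f i v = ∑ j, f v j := by
    rw [h1 (fun j => f v j), hv, add_zero]
    exact Finset.sum_congr rfl fun i _ => hs i v
  rw [h2]; ring

lemma rewire_compare {n : ℕ} (G : SimpleGraph (Fin n)) (v : Fin n) (S : Finset (Fin n))
    (hvS : v ∉ S) (x : Fin n → ℝ) (hx : adjMulVec G x = lam1 G • x)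
    (hle : lam1 (rewire G v S) ≤ lam1 G) :
    2 * ∑ u ∈ S, x u ≤ lam1 G * (1 + x v ^ 2) := by
  classical
  set L := lam1 G with hL
  have hx' : ∀ i, ∑ j, (if G.Adj i j then x j else 0) = L * x i := by
    intro i
    have := congrFun hx i
    simp only [adjMulVec, Matrix.mulVec, dotProduct, SimpleGraph.adjMatrix_apply, Pi.smul_apply,
      smul_eq_mul] at this
    rw [← this]
    refine Finset.sum_congr rfl fun j _ => ?_
    by_cases h : G.Adj i j <;> simp [h]
  set y : Fin n → ℝ := fun i => if i = v then 1 else x i with hy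
  have hr := rayleigh_le_lam1 (rewire G v S) y
  have s1 := sum_split v (fun i j => if G.Adj i j then x i * x j else 0)
    (fun i j => by simp only [G.adj_comm i j, mul_comm (x i)]) (by simp)
  have s2 := sum_split v (fun i j => if (rewire G v S).Adj i j then y i * y j else 0)
    (fun i j => by simp only [(rewire G v S).adj_comm i j, mul_comm (y i)]) (by simp)
  have e0 : ∑ i ∈ Finset.univ.erase v, ∑ j ∈ Finset.univ.erase v,
      (if (rewire G v S).Adj i j then y i * y j else 0) =
      ∑ i ∈ Finset.univ.erase v, ∑ j ∈ Finset.univ.erase v,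
      (if G.Adj i j then x i * x j else 0) := by
    refine Finset.sum_congr rfl fun i hi => Finset.sum_congr rfl fun j hj => ?_
    have hi' := Finset.ne_of_mem_erase hi
    have hj' := Finset.ne_of_mem_erase hj
    have : (rewire G v S).Adj i j ↔ G.Adj i j := by simp [rewire, hi', hj']
    simp [this, hy, hi', hj']
  have e1 : ∀ i, ∑ j, (if G.Adj i j then x i * x j else 0) = L * x i ^ 2 := by
    intro i
    have : ∑ j, (if G.Adj i j then x i * x j else 0)
        = x i * ∑ j, (if G.Adj i j then x j else 0) := by
      rw [Finset.mul_sum]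
      exact Finset.sum_congr rfl fun j _ => by split_ifs <;> simp
    rw [this, hx']; ring
  have e2 : ∑ j, (if (rewire G v S).Adj v j then y v * y j else 0) = ∑ u ∈ S, x u := by
    rw [← Finset.sum_filter]
    have : (Finset.univ.filter fun j => (rewire G v S).Adj v j) = S := by
      ext j
      simp only [rewire, Finset.mem_filter, Finset.mem_univ, true_and, ne_eq, not_true_eq_false,
        false_and, and_false, or_false, false_or]
      constructor
      · exact fun h => h.2
      · exact fun h => ⟨fun h' => hvS (h' ▸ h), h⟩
    rw [this]
    refine Finset.sum_congr rfl fun j hj => ?_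
    have : j ≠ v := fun h' => hvS (h' ▸ hj)
    simp [hy, this]
  have e3 : ∑ i, y i ^ 2 = ∑ i, x i ^ 2 - x v ^ 2 + 1 := by
    rw [← Finset.sum_erase_add _ _ (Finset.mem_univ v),
      ← Finset.sum_erase_add _ (fun i => x i ^ 2) (Finset.mem_univ v)]
    have : ∑ i ∈ Finset.univ.erase v, y i ^ 2 = ∑ i ∈ Finset.univ.erase v, x i ^ 2 := by
      refine Finset.sum_congr rfl fun i hi => ?_
      simp [hy, Finset.ne_of_mem_erase hi]
    rw [this]; simp [hy]
  have hnn : 0 ≤ ∑ i, y i ^ 2 := Finset.sum_nonneg fun i _ => sq_nonneg _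
  have hr2 := hr.trans (mul_le_mul_of_nonneg_right hle hnn)
  simp only [e1] at s1
  rw [← Finset.mul_sum] at s1
  rw [s2, e0, e2, e3] at hr2
  nlinarith

set_option maxHeartbeats 1000000 in
/-- All entries of the normalized principal eigenvector of a spectral
extremal `W_{2k+1}`-free graph exceed `1 - ε'`. -/
theorem eigenvector_entries_large (k : ℕ) (hk : 2 ≤ k) (ε' : ℝ) (hε'0 : 0 < ε')
    (hε'1 : ε' < 1) :
    ∃ N : ℕ, ∀ n : ℕ, N ≤ n → ∀ G : SimpleGraph (Fin n), IsSpexWheel (2 * k + 1) G →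
      ∀ x : Fin n → ℝ, (∀ v, 0 ≤ x v) → adjMulVec G x = lam1 G • x →
        (∀ v, x v ≤ 1) → (∃ v, x v = 1) →
        ∀ u : Fin n, 1 - ε' < x u := by
  classical
  have hkR : (2:ℝ) ≤ k := by exact_mod_cast hk
  obtain ⟨η, hη⟩ : ∃ η : ℝ, η = ε' / (100 * k) := ⟨_, rfl⟩
  have hηpos : 0 < η := by rw [hη]; positivity
  have hηk : η * k = ε' / 100 := by rw [hη]; field_simp
  have hη200 : η ≤ ε' / 200 := by nlinarith
  obtain ⟨δ, hδ⟩ : ∃ δ : ℝ, δ = η ^ 2 / 100 := ⟨_, rfl⟩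
  have hδpos : 0 < δ := by rw [hδ]; positivity
  obtain ⟨N1, hN1⟩ := kst_weak k (by omega) δ hδpos
  obtain ⟨N2, hN2⟩ := exists_nat_ge (1 / δ)
  obtain ⟨N3, hN3⟩ := exists_nat_ge (1 / η)
  refine ⟨N1 + N2 + N3 + 100 * (2 * k + 1) + 1, ?_⟩
  intro n hn G hG x hx0 hx hx1 ⟨z, hz⟩ v
  by_contra hcon
  push Not at hcon
  have hnR : (N1:ℝ) + N2 + N3 + 100 * (2 * k + 1) + 1 ≤ n := by exact_mod_cast hn
  have p1 : (0:ℝ) ≤ N1 := Nat.cast_nonneg _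
  have p2 : (0:ℝ) ≤ N2 := Nat.cast_nonneg _
  have p3 : (0:ℝ) ≤ N3 := Nat.cast_nonneg _
  have hn1 : (1:ℝ) ≤ n := by linarith
  have hn0 : (0:ℝ) < n := by linarith
  have hδn : 1 ≤ δ * n := by
    rw [div_le_iff₀ hδpos] at hN2
    nlinarith
  have hηn : 1 ≤ η * n := by
    rw [div_le_iff₀ hηpos] at hN3
    nlinarith
  have hkn : 100 * (2 * (k:ℝ) + 1) ≤ n := by linarith
  have hlow := lam1_lower hk (by omega) G hG
  set L := lam1 G with hL
  have hx' : ∀ i, ∑ j, (if G.Adj i j then x j else 0) = L * x i := by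
    intro i
    have := congrFun hx i
    simp only [adjMulVec, Matrix.mulVec, dotProduct, SimpleGraph.adjMatrix_apply, Pi.smul_apply,
      smul_eq_mul] at this
    rw [← this]
    refine Finset.sum_congr rfl fun j _ => ?_
    by_cases h : G.Adj i j <;> simp [h]
  set A := Finset.univ.filter fun u => G.Adj z u with hA
  set d : Fin n → Finset (Fin n) := fun w => A.filter fun u => G.Adj w u with hd
  -- sum over walks of length two
  have hL2 : L ^ 2 = ∑ w, ((d w).card : ℝ) * x w := by
    have h1 := hx' z
    rw [hz, mul_one, ← Finset.sum_filter, ← hA] at h1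
    have h2 : L ^ 2 = ∑ u ∈ A, ∑ w, (if G.Adj u w then x w else 0) := by
      rw [Finset.sum_congr rfl fun u _ => hx' u, ← Finset.mul_sum, h1]; ring
    rw [h2, Finset.sum_comm]
    refine Finset.sum_congr rfl fun w _ => ?_
    rw [← Finset.sum_filter, Finset.sum_const, nsmul_eq_mul]
    congr 3
    ext u; simp [hd, G.adj_comm]
  have hAsum : ∑ w ∈ A, ((d w).card : ℝ) ≤ δ * (n:ℝ) ^ 2 := by
    by_contra hcc
    push Not at hcc
    obtain ⟨P, Q, hPA, hP, hQ, hPQ⟩ := hN1 n (by omega) A d hcc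
    apply hG.1
    have hPne : P.Nonempty := by rw [← Finset.card_pos]; omega
    obtain ⟨p, hp⟩ := hPne
    refine wheel_of_biclique hk G z P Q hP hQ ?_ ?_ ?_
    · exact fun w hw => (Finset.mem_filter.1 (hPA hw)).2
    · intro w hw
      have := (Finset.mem_filter.1 (hPQ p hp hw)).1
      exact (Finset.mem_filter.1 this).2
    · exact fun w hw u hu => (Finset.mem_filter.1 (hPQ w hw hu)).2
  have hAsum' : ∑ w ∈ A, ((d w).card : ℝ) * x w ≤ δ * (n:ℝ) ^ 2 := by
    refine le_trans (Finset.sum_le_sum fun w _ => ?_) hAsum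
    exact mul_le_of_le_one_right (Nat.cast_nonneg _) (hx1 w)
  have hdA : ∀ w, ((d w).card : ℝ) ≤ A.card := fun w => by
    exact_mod_cast Finset.card_filter_le _ _
  have hdx : ∀ w, ((d w).card : ℝ) * x w ≤ (d w).card := fun w =>
    mul_le_of_le_one_right (Nat.cast_nonneg _) (hx1 w)
  set a : ℝ := (A.card : ℝ) with ha
  have hbc : ((Aᶜ).card : ℝ) = n - a := by
    rw [Finset.card_compl, Nat.cast_sub (Finset.card_le_univ _)]; simp [ha]
  have hD : ∑ w ∈ Aᶜ, (a - (d w).card * x w) = (n - a) * a - ∑ w ∈ Aᶜ, ((d w).card : ℝ) * x w := by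
    rw [Finset.sum_sub_distrib, Finset.sum_const, nsmul_eq_mul, hbc]
  have hsplit : L ^ 2 = ∑ w ∈ A, ((d w).card : ℝ) * x w + ∑ w ∈ Aᶜ, ((d w).card : ℝ) * x w := by
    rw [hL2, Finset.sum_add_sum_compl]
  have hLsq : (n:ℝ) ^ 2 / 4 - n / 2 ≤ L ^ 2 := by
    have : (((n:ℝ) - 1) / 2) ^ 2 ≤ L ^ 2 := pow_le_pow_left₀ (by linarith) hlow 2
    linarith
  have hterm : ∀ w, 0 ≤ a - (d w).card * x w := fun w => by linarith [hdA w, hdx w]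
  have hDnn : 0 ≤ ∑ w ∈ Aᶜ, (a - (d w).card * x w) := Finset.sum_nonneg fun w _ => hterm w
  have hnδ : (n:ℝ) ≤ δ * (n:ℝ) ^ 2 := by
    linarith [mul_le_mul_of_nonneg_right hδn hn0.le]
  have hid : ((n:ℝ) - a) * a = (n:ℝ) ^ 2 / 4 - (a - n / 2) ^ 2 := by ring
  have hDup : ∑ w ∈ Aᶜ, (a - (d w).card * x w) ≤ 2 * δ * (n:ℝ) ^ 2 := by
    linarith [sq_nonneg (a - n / 2)]
  have hasq : (a - n / 2) ^ 2 ≤ 2 * δ * (n:ℝ) ^ 2 := by linarith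
  have hasq' : (a - n / 2) ^ 2 ≤ (η * n) ^ 2 := by
    have : 2 * δ * (n:ℝ) ^ 2 ≤ (η * n) ^ 2 := by
      rw [hδ]; linarith [sq_nonneg (η * n)]
    linarith
  have haabs := abs_le_of_sq_le_sq' hasq' (by positivity)
  have hLup : L ≤ (1 / 2 + η) * n := by
    have h1 : L ^ 2 ≤ ((1 / 2 + η) * n) ^ 2 := by
      have h2 : L ^ 2 ≤ δ * (n:ℝ) ^ 2 + (n:ℝ) ^ 2 / 4 := by
        linarith [sq_nonneg (a - n / 2)]
      have h3 : δ * (n:ℝ) ^ 2 ≤ (η * n) ^ 2 := by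
        rw [hδ]; linarith [sq_nonneg (η * n)]
      have h4 : 0 ≤ η * n * n := by positivity
      linarith
    exact (abs_le_of_sq_le_sq' h1 (by positivity)).2
  have hηsmall : η ≤ 1 / 200 := by linarith
  have ha3 : n / 3 ≤ a := by
    linarith [haabs.1, mul_le_mul_of_nonneg_right hηsmall hn0.le]
  -- good vertices
  set B' := Aᶜ.filter fun w => a - (d w).card * x w ≤ η * n with hB'
  have hB'card : (n:ℝ) - a - η * n ≤ B'.card := by
    have h1 : ∑ w ∈ Aᶜ, (η * n - if a - (d w).card * x w ≤ η * n then η * n else 0) ≤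
        ∑ w ∈ Aᶜ, (a - (d w).card * x w) := by
      refine Finset.sum_le_sum fun w _ => ?_
      split_ifs with h
      · have := hterm w
        linarith
      · push Not at h; linarith
    rw [Finset.sum_sub_distrib, ← Finset.sum_filter, Finset.sum_const, Finset.sum_const,
      nsmul_eq_mul, nsmul_eq_mul, ← hB', hbc] at h1
    have h2 : 2 * δ * (n:ℝ) ^ 2 ≤ (η * n) * (η * n) := by
      rw [hδ]; linarith [sq_nonneg (η * n)]
    have h3 : ((n:ℝ) - a - η * n) * (η * n) ≤ B'.card * (η * n) := by linarith
    exact le_of_mul_le_mul_right h3 (by positivity)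
  set S := B'.erase v with hS
  have hScard : (n:ℝ) - a - η * n - 1 ≤ S.card := by
    have : B'.card ≤ S.card + 1 := by
      have := Finset.pred_card_le_card_erase (s := B') (a := v)
      rw [← hS] at this
      omega
    have : (B'.card : ℝ) ≤ S.card + 1 := by exact_mod_cast this
    linarith
  have hSprop : ∀ w ∈ S, a - (d w).card * x w ≤ η * n := fun w hw =>
    (Finset.mem_filter.1 (Finset.mem_of_mem_erase hw)).2
  have hSx : ∀ w ∈ S, 1 - 3 * η ≤ x w := by
    intro w hw
    have h1 := hSprop w hw
    have h2 : ((d w).card : ℝ) * x w ≤ a * x w := mul_le_mul_of_nonneg_right (hdA w) (hx0 w)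
    have h3 : η * (n / 3) ≤ η * a := mul_le_mul_of_nonneg_left ha3 hηpos.le
    have h4 : (1 - 3 * η) * a ≤ x w * a := by linarith
    exact le_of_mul_le_mul_right h4 (by linarith)
  have hfree : WheelFree (2 * k + 1) (rewire G v S) := by
    refine rewire_wheelFree G hG.1 v S ?_
    intro T hT
    by_contra hno
    push Not at hno
    have hsub : A ⊆ T ∪ (T.filter (· ∈ S)).biUnion fun u => A \ d u := by
      intro w hw
      by_cases hwT : w ∈ T
      · exact Finset.mem_union_left _ hwT
      · obtain ⟨u, huT, huS, hnadj⟩ := hno w hwT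
        refine Finset.mem_union_right _ (Finset.mem_biUnion.2 ⟨u, by simp [huT, huS], ?_⟩)
        simp only [hd, Finset.mem_sdiff, Finset.mem_filter, not_and]
        exact ⟨hw, fun _ h => hnadj h.symm⟩
    have hc1 := (Finset.card_le_card hsub).trans (Finset.card_union_le _ _)
    have hc2 : a ≤ T.card + (((T.filter (· ∈ S)).biUnion fun u => A \ d u).card : ℝ) := by
      rw [ha]; exact_mod_cast hc1
    have hc3 : (((T.filter (· ∈ S)).biUnion fun u => A \ d u).card : ℝ) ≤
        ∑ u ∈ T.filter (· ∈ S), ((A \ d u).card : ℝ) := by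
      exact_mod_cast Finset.card_biUnion_le
    have hc4 : ∑ u ∈ T.filter (· ∈ S), ((A \ d u).card : ℝ) ≤
        (T.filter (· ∈ S)).card • (η * n) := by
      refine Finset.sum_le_card_nsmul _ _ _ fun u hu => ?_
      have h1 := hSprop u (Finset.mem_filter.1 hu).2
      rw [Finset.cast_card_sdiff (Finset.filter_subset _ _)]
      linarith [hdx u]
    rw [nsmul_eq_mul] at hc4
    have hT' : (T.card : ℝ) ≤ 2 * k + 1 := by exact_mod_cast hT
    have hT2 : ((T.filter (· ∈ S)).card : ℝ) ≤ 2 * k + 1 :=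
      le_trans (by exact_mod_cast Finset.card_filter_le _ _) hT'
    have hc5 : ((T.filter (· ∈ S)).card : ℝ) * (η * n) ≤ (2 * k + 1) * (η * n) :=
      mul_le_mul_of_nonneg_right hT2 (by positivity)
    have hc6 : (2 * k + 1) * (η * n) ≤ 3 / 100 * n := by
      have : (2 * k + 1) * η ≤ 3 / 100 := by linarith
      linarith [mul_le_mul_of_nonneg_right this hn0.le]
    linarith
  have hcmp := rewire_compare G v S (Finset.notMem_erase v B') x hx (hG.2 _ hfree)
  rw [← hL] at hcmp
  have hSsum : (S.card : ℝ) * (1 - 3 * η) ≤ ∑ u ∈ S, x u := by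
    rw [← nsmul_eq_mul]
    exact Finset.card_nsmul_le_sum _ _ _ hSx
  have hS2 : (n:ℝ) / 2 - 3 * (η * n) ≤ S.card := by linarith [haabs.2]
  have hS3 : ((n:ℝ) / 2 - 3 * (η * n)) * (1 - 3 * η) ≤ ∑ u ∈ S, x u :=
    le_trans (mul_le_mul_of_nonneg_right hS2 (by linarith)) hSsum
  have hxv : 1 + x v ^ 2 ≤ 2 - ε' := by
    have := mul_nonneg (hx0 v) (sub_nonneg.2 (hx1 v))
    linarith
  have hL0 : 0 ≤ L := by linarith
  have hup2 : L * (1 + x v ^ 2) ≤ (1 / 2 + η) * n * (2 - ε') :=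
    (mul_le_mul_of_nonneg_left hxv hL0).trans
      (mul_le_mul_of_nonneg_right hLup (by linarith))
  have hfin : 2 * ((1 / 2 - 3 * η) * (1 - 3 * η)) * n ≤ ((1 / 2 + η) * (2 - ε')) * n := by
    linarith
  have hfin' := le_of_mul_le_mul_right hfin hn0
  linarith [sq_nonneg η, mul_pos hηpos hε'0]
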